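/- arXiv:2104.11053 — 2 statements merged into one kernel-verified Lean document; each statement's English description precedes it below -/
import Mathlib

section
/- Let V' = ℝ² with standard orthonormal basis e₁,e₂ and standard inner product h. Let P be a linear map on V' with P² = id, tr P = 0 and h(Px,Py) = h(x,y) for all x,y. Let F' : V'×V'×V' → ℝ be a trilinear form satisfying F'(x,y,z) = F'(x,z,y) and F'(x,Py,z) = −F'(x,y,Pz) for all x,y,z. Define θ'(z) = Σ_{i=1}^{2} F'(e_i,e_i,z) and θ'*(z) = −θ'(Pz). Then F'(x,y,z) = (1/2)[h(x,y)θ'(z) + h(x,z)θ'(y) + h(x,Py)θ'*(z) + h(x,Pz)θ'*(y)] for all x,y,z (i.e. every 2-dimensional almost paracomplex Riemannian manifold is a W₁-manifold). -/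
noncomputable section

/-- `V' = ℝ²` with standard basis and inner product. -/
abbrev V2 : Type := Fin 2 → ℝ

/-- The standard basis `e₁, e₂` of `V2`. -/
def e2 (i : Fin 2) : V2 := Pi.single i 1

/-- The standard inner product `h` on `V2`. -/
def g2 (x y : V2) : ℝ := ∑ i, x i * y i

/-- A map `F : V'×V'×V' → ℝ` is trilinear. -/
def IsTrilinear2 (F : V2 → V2 → V2 → ℝ) : Prop :=
  (∀ (c : ℝ) (x x' y z : V2), F (c • x + x') y z = c * F x y z + F x' y z) ∧
  (∀ (c : ℝ) (x y y' z : V2), F x (c • y + y') z = c * F x y z + F x y' z) ∧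
  (∀ (c : ℝ) (x y z z' : V2), F x y (c • z + z') = c * F x y z + F x y z')

/-!
A compatible involution `P` is symmetric, hence diagonal in some orthonormal basis `b`, with
eigenvalues `±1`. Since `P` is skew for each `F x`, the component `F x (b j) (b k)` vanishes unless
`b j` and `b k` have opposite eigenvalues. In dimension two this leaves only
`F (b j) (b j) (b k) = F (b j) (b k) (b j)` with `j ≠ k`, and the vanishing of `F (b k) (b k) (b k)`
identifies it with the value of the Lee form at `b k`.
-/

open Module

section Skew

variable {R M : Type*} [CommRing R] [AddCommGroup M] [Module R M]
  {B : LinearMap.BilinForm R M} {P : M →ₗ[R] M} {a c : R} {u v : M}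

lemma add_mul_apply_eq_zero_of_isSkewAdjoint (hB : B.IsSkewAdjoint P)
    (hu : P u = a • u) (hv : P v = c • v) : (a + c) * B u v = 0 := by
  have h : a * B u v = -(c * B u v) := by simpa [hu, hv] using hB u v
  linear_combination h

lemma sq_eq_one_of_involutive [IsDomain R] [IsTorsionFree R M] (hP : Function.Involutive P)
    (hu : P u = a • u) (hu₀ : u ≠ 0) : a ^ 2 = 1 := by
  have h : a ^ 2 • u = (1 : R) • u := by simpa [hu, smul_smul, ← sq] using hP u
  exact smul_left_injective R hu₀ h

end Skew

section InnerProductSpace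

variable {V : Type*} [NormedAddCommGroup V] [InnerProductSpace ℝ V]

open scoped InnerProductSpace

lemma isSymmetric_of_involutive {P : V →ₗ[ℝ] V} (hP : Function.Involutive P)
    (hPh : ∀ x y, ⟪P x, P y⟫_ℝ = ⟪x, y⟫_ℝ) : P.IsSymmetric := fun x y ↦ by
  simpa [hP y] using hPh x (P y)

lemma exists_orthonormalBasis_apply_eq_smul [FiniteDimensional ℝ V] {n : ℕ}
    (hn : finrank ℝ V = n) {P : V →ₗ[ℝ] V} (hP : Function.Involutive P)
    (hPh : ∀ x y, ⟪P x, P y⟫_ℝ = ⟪x, y⟫_ℝ) :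
    ∃ (b : OrthonormalBasis (Fin n) ℝ V) (c : Fin n → ℝ),
      (∀ i, P (b i) = c i • b i) ∧ ∀ i, c i ^ 2 = 1 := by
  have hsymm := isSymmetric_of_involutive hP hPh
  have heigen := hsymm.apply_eigenvectorBasis hn
  exact ⟨hsymm.eigenvectorBasis hn, hsymm.eigenvalues hn, heigen, fun i ↦
    sq_eq_one_of_involutive hP (heigen i) ((hsymm.eigenvectorBasis hn).orthonormal.ne_zero i)⟩

/-- The Lee form of a trilinear form `F`: the metric contraction of its first two arguments,
encoded without a basis through the canonical tensor of the inner product. -/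
def leeForm [FiniteDimensional ℝ V] (F : V →ₗ[ℝ] V →ₗ[ℝ] V →ₗ[ℝ] ℝ) : V →ₗ[ℝ] ℝ :=
  TensorProduct.lift F (InnerProductSpace.canonicalCovariantTensor V)

lemma leeForm_apply_eq_sum [FiniteDimensional ℝ V] {ι : Type*} [Fintype ι]
    (F : V →ₗ[ℝ] V →ₗ[ℝ] V →ₗ[ℝ] ℝ) (b : OrthonormalBasis ι ℝ V) (z : V) :
    leeForm F z = ∑ i, F (b i) (b i) z := by
  simp [leeForm, InnerProductSpace.canonicalCovariantTensor_eq_sum V b]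

/-- The trilinear form that the class `W₁` prescribes in dimension two for the structure `P` and
the Lee form `θ`; the associated Lee form `θ*` is `-θ ∘ P`. -/
def w₁Tensor (P : V →ₗ[ℝ] V) (θ : V →ₗ[ℝ] ℝ) : V →ₗ[ℝ] V →ₗ[ℝ] V →ₗ[ℝ] ℝ :=
  let S : V →ₗ[ℝ] V →ₗ[ℝ] V →ₗ[ℝ] ℝ :=
    (innerₗ V).compr₂ (LinearMap.toSpanSingleton ℝ _ θ) +
      ((innerₗ V).compl₂ P).compr₂ (LinearMap.toSpanSingleton ℝ _ (-(θ ∘ₗ P)))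
  (1 / 2 : ℝ) • (S + LinearMap.lflip.toLinearMap ∘ₗ S)

lemma w₁Tensor_apply (P : V →ₗ[ℝ] V) (θ : V →ₗ[ℝ] ℝ) (x y z : V) :
    w₁Tensor P θ x y z = (1 / 2) * (⟪x, y⟫_ℝ * θ z + ⟪x, z⟫_ℝ * θ y
      + ⟪x, P y⟫_ℝ * -θ (P z) + ⟪x, P z⟫_ℝ * -θ (P y)) := by
  simp only [w₁Tensor, LinearMap.add_apply, LinearMap.smul_apply, LinearMap.comp_apply,
    LinearEquiv.coe_coe, LinearMap.lflip_apply, LinearMap.flip_apply, LinearMap.compr₂_apply,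
    LinearMap.compl₂_apply, innerₗ_apply_apply, LinearMap.toSpanSingleton_apply,
    LinearMap.neg_apply, smul_eq_mul]
  ring

section Eigenbasis

variable {ι : Type*} [Fintype ι] {P : V →ₗ[ℝ] V} {c : ι → ℝ}

lemma w₁Tensor_apply_eigenbasis [DecidableEq ι] {b : OrthonormalBasis ι ℝ V}
    (hb : ∀ i, P (b i) = c i • b i) (θ : V →ₗ[ℝ] ℝ) (i j k : ι) :
    w₁Tensor P θ (b i) (b j) (b k) = (1 - c j * c k) / 2 *
      ((if i = j then 1 else 0) * θ (b k) + (if i = k then 1 else 0) * θ (b j)) := by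
  simp only [w₁Tensor_apply, hb, map_smul, inner_smul_right, smul_eq_mul, b.inner_eq_ite]
  ring

variable [FiniteDimensional ℝ V] {F : V →ₗ[ℝ] V →ₗ[ℝ] V →ₗ[ℝ] ℝ}

lemma leeForm_apply_eq_of_ne {b : OrthonormalBasis (Fin 2) ℝ V} {c : ℝ} {j k : Fin 2}
    (hskew : (F (b k)).IsSkewAdjoint P) (hk : P (b k) = c • b k) (hc : c ≠ 0) (hjk : j ≠ k) :
    leeForm F (b k) = F (b j) (b j) (b k) := by
  have hdiag : F (b k) (b k) (b k) = 0 := by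
    have h := add_mul_apply_eq_zero_of_isSkewAdjoint hskew hk hk
    simpa [← two_mul, hc] using h
  have huniv : Finset.univ = {j, k} := by
    ext i
    simp only [Finset.mem_univ, Finset.mem_insert, Finset.mem_singleton, true_iff]
    lia
  rw [leeForm_apply_eq_sum F b, huniv, Finset.sum_pair hjk, hdiag, add_zero]

lemma apply_eigenbasis_eq_w₁Tensor {b : OrthonormalBasis (Fin 2) ℝ V} {c : Fin 2 → ℝ}
    (hb : ∀ i, P (b i) = c i • b i) (hc : ∀ i, c i ^ 2 = 1)
    (hsymm : ∀ x, (F x).IsSymm) (hskew : ∀ x, (F x).IsSkewAdjoint P) (i j k : Fin 2) :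
    F (b i) (b j) (b k) = w₁Tensor P (leeForm F) (b i) (b j) (b k) := by
  have hne (i) : c i ≠ 0 := by
    intro h
    simpa [h] using hc i
  rw [w₁Tensor_apply_eigenbasis hb]
  obtain hsame | hopp := sq_eq_sq_iff_eq_or_eq_neg.mp ((hc j).trans (hc k).symm)
  · have hvanish : F (b i) (b j) (b k) = 0 := by
      have h := add_mul_apply_eq_zero_of_isSkewAdjoint (hskew (b i)) (hb j) (hb k)
      simpa [hsame, ← two_mul, hne k] using h
    rw [hvanish, hsame, ← sq, hc k]
    ring
  · have hjk : j ≠ k := by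
      rintro rfl
      exact hne j (self_eq_neg.mp hopp)
    have hcoeff : (1 - c j * c k) / 2 = 1 := by linear_combination (hc k - c k * hopp) / 2
    obtain rfl | rfl : i = j ∨ i = k := by lia
    · simp [hcoeff, hjk, leeForm_apply_eq_of_ne (hskew (b k)) (hb k) (hne k) hjk]
    · have hswap : F (b i) (b j) (b i) = F (b i) (b i) (b j) := (hsymm (b i)).eq (b j) (b i)
      simp [hcoeff, hjk.symm, leeForm_apply_eq_of_ne (hskew (b j)) (hb j) (hne j) hjk.symm, hswap]

end Eigenbasis

theorem statement0_general [FiniteDimensional ℝ V] (hV : finrank ℝ V = 2) {P : V →ₗ[ℝ] V}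
    (hP : Function.Involutive P) (hPh : ∀ x y, ⟪P x, P y⟫_ℝ = ⟪x, y⟫_ℝ)
    {F : V →ₗ[ℝ] V →ₗ[ℝ] V →ₗ[ℝ] ℝ} (hsymm : ∀ x, (F x).IsSymm)
    (hskew : ∀ x, (F x).IsSkewAdjoint P) (x y z : V) :
    F x y z = (1 / 2) * (⟪x, y⟫_ℝ * leeForm F z + ⟪x, z⟫_ℝ * leeForm F y
      + ⟪x, P y⟫_ℝ * -leeForm F (P z) + ⟪x, P z⟫_ℝ * -leeForm F (P y)) := by
  obtain ⟨b, c, hb, hc⟩ := exists_orthonormalBasis_apply_eq_smul hV hP hPh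
  have hF : F = w₁Tensor P (leeForm F) := by
    refine b.toBasis.ext fun i ↦ b.toBasis.ext fun j ↦ b.toBasis.ext fun k ↦ ?_
    simpa only [b.coe_toBasis] using apply_eigenbasis_eq_w₁Tensor hb hc hsymm hskew i j k
  rw [← w₁Tensor_apply, ← hF]

end InnerProductSpace

section Coordinates

lemma isLinearMap_of_map_smul_add {R M N : Type*} [Ring R] [AddCommGroup M] [AddCommGroup N]
    [Module R M] [Module R N] {f : M → N} (hf : ∀ (a : R) x y, f (a • x + y) = a • f x + f y) :
    IsLinearMap R f := by
  have hzero : f 0 = 0 := by simpa using hf 1 0 0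
  exact ⟨fun x y ↦ by simpa using hf 1 x y, fun a x ↦ by simpa [hzero] using hf a x 0⟩

/-- A trilinear form on `V2` as a bundled form on Euclidean space; `V2` itself cannot be used,
because it carries the sup norm. -/
def IsTrilinear2.toEuclidean {F : V2 → V2 → V2 → ℝ} (hF : IsTrilinear2 F) :
    EuclideanSpace ℝ (Fin 2) →ₗ[ℝ] EuclideanSpace ℝ (Fin 2) →ₗ[ℝ]
      EuclideanSpace ℝ (Fin 2) →ₗ[ℝ] ℝ :=
  have h₁ (y z) : IsLinearMap ℝ (F · y z) := isLinearMap_of_map_smul_add (hF.1 · · · y z)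
  have h₂ (x z) : IsLinearMap ℝ (F x · z) := isLinearMap_of_map_smul_add (hF.2.1 · x · · z)
  have h₃ (x y) : IsLinearMap ℝ (F x y) := isLinearMap_of_map_smul_add (hF.2.2 · x y)
  LinearMap.mk₂ ℝ
    (fun x y ↦ (h₃ x.ofLp y.ofLp).mk' ∘ₗ (WithLp.linearEquiv 2 ℝ V2).toLinearMap)
    (fun x x' y ↦ LinearMap.ext fun z ↦ (h₁ y.ofLp z.ofLp).map_add x.ofLp x'.ofLp)
    (fun a x y ↦ LinearMap.ext fun z ↦ (h₁ y.ofLp z.ofLp).map_smul a x.ofLp)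
    (fun x y y' ↦ LinearMap.ext fun z ↦ (h₂ x.ofLp z.ofLp).map_add y.ofLp y'.ofLp)
    (fun a x y ↦ LinearMap.ext fun z ↦ (h₂ x.ofLp z.ofLp).map_smul a y.ofLp)

lemma IsTrilinear2.toEuclidean_apply {F : V2 → V2 → V2 → ℝ} (hF : IsTrilinear2 F)
    (x y z : EuclideanSpace ℝ (Fin 2)) : hF.toEuclidean x y z = F x.ofLp y.ofLp z.ofLp :=
  rfl

lemma IsTrilinear2.leeForm_toEuclidean {F : V2 → V2 → V2 → ℝ} (hF : IsTrilinear2 F)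
    (z : EuclideanSpace ℝ (Fin 2)) :
    leeForm hF.toEuclidean z = ∑ i, F (e2 i) (e2 i) z.ofLp := by
  simp [leeForm_apply_eq_sum _ (EuclideanSpace.basisFun (Fin 2) ℝ), hF.toEuclidean_apply, e2]

lemma inner_eq_g2 (x y : EuclideanSpace ℝ (Fin 2)) : inner ℝ x y = g2 x.ofLp y.ofLp := by
  simp [PiLp.inner_apply, g2, mul_comm]

end Coordinates

/-- Every 2-dimensional almost paracomplex Riemannian manifold is a `W₁`-manifold:
if `P` is an almost paracomplex structure on `(ℝ², h)` compatible with `h`, and `F'` is a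
trilinear form with the symmetries of the fundamental tensor, then `F'` is expressed through
its Lee form `θ'` by the `W₁`-formula. -/
theorem statement0 (P : V2 →ₗ[ℝ] V2)
    (hP2 : ∀ x, P (P x) = x)
    (hPtr : LinearMap.trace ℝ V2 P = 0)
    (hPg : ∀ x y, g2 (P x) (P y) = g2 x y)
    (F' : V2 → V2 → V2 → ℝ)
    (hlin : IsTrilinear2 F')
    (hsym : ∀ x y z, F' x y z = F' x z y)
    (hPF : ∀ x y z, F' x (P y) z = - F' x y (P z))
    (θ' : V2 → ℝ) (hθ' : ∀ z, θ' z = ∑ i, F' (e2 i) (e2 i) z)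
    (θ's : V2 → ℝ) (hθ's : ∀ z, θ's z = - θ' (P z)) :
    ∀ x y z, F' x y z =
      (1 / 2) * (g2 x y * θ' z + g2 x z * θ' y + g2 x (P y) * θ's z + g2 x (P z) * θ's y) := by
  intro x y z
  let φ : EuclideanSpace ℝ (Fin 2) ≃ₗ[ℝ] V2 := WithLp.linearEquiv 2 ℝ V2
  have hφP (v) : (φ.symm.conj P v).ofLp = P v.ofLp := rfl
  have hinv : Function.Involutive (φ.symm.conj P) := fun v ↦ WithLp.ofLp_injective 2 (hP2 v.ofLp)
  have hisom (v w) : inner ℝ (φ.symm.conj P v) (φ.symm.conj P w) = inner ℝ v w := by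
    simp only [inner_eq_g2, hφP, hPg]
  have hsymm (v) : (hlin.toEuclidean v).IsSymm := ⟨fun w w' ↦ hsym v.ofLp w.ofLp w'.ofLp⟩
  have hskew (v) : (hlin.toEuclidean v).IsSkewAdjoint (φ.symm.conj P) := fun w w' ↦ by
    rw [Pi.neg_apply, map_neg]
    exact hPF v.ofLp w.ofLp w'.ofLp
  simpa only [hlin.toEuclidean_apply, hlin.leeForm_toEuclidean, inner_eq_g2, hφP, hθ's, hθ'] using
    statement0_general finrank_euclideanSpace_fin hinv hisom hsymm hskew
      (WithLp.toLp 2 x) (WithLp.toLp 2 y) (WithLp.toLp 2 z)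
end
end

section
/- For reals k′ and t > 0, the cone curvature tensor R_C has the following properties: (1) the sectional curvatures of the ξ-sections vanish, k(e₀,e₁) = k(e₀,e₂) = 0, while k(e₁,e₂) = (k′−1)/t²; (2) it is *-scalar flat, τ* = 0; (3) τ = 2(k′−1)/t², so τ < 0 iff k′ < 1 and τ > 0 iff k′ > 1; (4) the nonzero Ricci-type components are ρ(e₁,e₁) = ρ(e₂,e₂) = (k′−1)/t² and ρ*(e₁,e₂) = ρ*(e₂,e₁) = −(k′−1)/t². -/
noncomputable section

/-- `V = ℝ³` with standard basis and inner product. -/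
abbrev V3 : Type := Fin 3 → ℝ

/-- The standard basis `e₀, e₁, e₂` of `V3`. -/
def e3 (i : Fin 3) : V3 := Pi.single i 1

/-- The standard inner product `g` on `V3`. -/
def g3 (x y : V3) : ℝ := ∑ i, x i * y i

/-- The paracontact endomorphism `φ`: `φe₀ = 0`, `φe₁ = e₂`, `φe₂ = e₁`. -/
def phi3 (x : V3) : V3 := ![0, x 2, x 1]

/-- A map `F : V×V×V → ℝ` is trilinear. -/
def IsTrilinear (F : V3 → V3 → V3 → ℝ) : Prop :=
  (∀ (c : ℝ) (x x' y z : V3), F (c • x + x') y z = c * F x y z + F x' y z) ∧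
  (∀ (c : ℝ) (x y y' z : V3), F x (c • y + y') z = c * F x y z + F x y' z) ∧
  (∀ (c : ℝ) (x y z z' : V3), F x y (c • z + z') = c * F x y z + F x y z')

/-- The horizontal part `x̄ = x − η(x)ξ` of a vector. -/
def hpart (x : V3) : V3 := x - x 0 • e3 0

/-- The cone curvature tensor
`R_C(x,y,z,w) = ((k′−1)/t²)·[g(ȳ,z̄)g(x̄,w̄) − g(x̄,z̄)g(ȳ,w̄)]`. -/
def RC (k' t : ℝ) (x y z w : V3) : ℝ :=
  ((k' - 1) / t ^ 2) *
    (g3 (hpart y) (hpart z) * g3 (hpart x) (hpart w)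
      - g3 (hpart x) (hpart z) * g3 (hpart y) (hpart w))

/-- The Ricci tensor of a curvature-like tensor. -/
def ricci (R : V3 → V3 → V3 → V3 → ℝ) (y z : V3) : ℝ := ∑ i, R (e3 i) y z (e3 i)

/-- The associated Ricci tensor `ρ*`. -/
def ricciStar (R : V3 → V3 → V3 → V3 → ℝ) (y z : V3) : ℝ :=
  ∑ i, R (e3 i) y z (phi3 (e3 i))

/-- The scalar curvature `τ`. -/
def scal (R : V3 → V3 → V3 → V3 → ℝ) : ℝ := ∑ i, ricci R (e3 i) (e3 i)

/-- The associated scalar curvature `τ*`. -/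
def scalStar (R : V3 → V3 → V3 → V3 → ℝ) : ℝ := ∑ i, ricciStar R (e3 i) (e3 i)

/-- The sectional curvature of the plane spanned by `x, y`. -/
def sect (R : V3 → V3 → V3 → V3 → ℝ) (x y : V3) : ℝ :=
  R x y y x / (g3 x x * g3 y y - (g3 x y) ^ 2)

/-!
With `c = (k' - 1) / t ^ 2` and the degenerate metric `h(x, y) = g(x̄, ȳ)`, the cone curvature is
`R_C(x, y, z, w) = c * (h(y, z) h(x, w) - h(x, z) h(y, w))`. For an endomorphism `A` with adjoint
`B`, Parseval's identity gives the contraction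
`∑ i, R_C(eᵢ, y, z, A eᵢ) = c * ((∑ i, h(eᵢ, A eᵢ)) h(y, z) - h(z, B ȳ))`.
Both Ricci tensors are instances: `A = id` has `h`-trace `2`, so `ρ = c h`, while `A = φ` is
symmetric with `h`-trace `0`, so `ρ*(y, z) = -c h(y, φ z)`. Tracing once more gives `τ = 2 c` and
`τ* = 0`.
-/

theorem g3_comm (x y : V3) : g3 x y = g3 y x :=
  dotProduct_comm x y

theorem e3_apply (i j : Fin 3) : e3 i j = if j = i then 1 else 0 :=
  Pi.single_apply i 1 j

theorem g3_e3_right (x : V3) (i : Fin 3) : g3 x (e3 i) = x i :=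
  dotProduct_single_one x i

theorem sum_g3_e3_mul_g3_e3 (x y : V3) : ∑ i, g3 x (e3 i) * g3 y (e3 i) = g3 x y := by
  simp only [g3_e3_right]
  rfl

theorem g3_hpart_left (x y : V3) : g3 (hpart x) y = x 1 * y 1 + x 2 * y 2 := by
  simp [g3, hpart, e3_apply, Fin.sum_univ_three]

theorem g3_hpart_hpart (x y : V3) : g3 (hpart x) (hpart y) = g3 (hpart x) y := by
  rw [g3_hpart_left, g3_hpart_left]
  simp [hpart, e3_apply]

theorem hpart_eq_self {x : V3} (hx : x 0 = 0) : hpart x = x := by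
  simp [hpart, hx]

theorem hpart_e3_zero : hpart (e3 0) = 0 := by
  simp [hpart, e3]

theorem g3_phi3_right (x y : V3) : g3 x (phi3 y) = g3 (phi3 x) y := by
  simp [g3, phi3, Fin.sum_univ_three, add_comm, mul_comm]

theorem phi3_hpart (x : V3) : phi3 (hpart x) = phi3 x := by
  simp [phi3, hpart, e3_apply]

theorem sum_g3_hpart_e3_self : ∑ i, g3 (hpart (e3 i)) (e3 i) = 2 := by
  simp [g3_hpart_left, e3_apply, Fin.sum_univ_three, one_add_one_eq_two]

theorem sum_g3_hpart_e3_phi3_e3 : ∑ i, g3 (hpart (e3 i)) (phi3 (e3 i)) = 0 := by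
  simp [g3_hpart_left, phi3, e3_apply, Fin.sum_univ_three]

section ConeCurvature

variable (k' t : ℝ)

theorem sum_RC_e3_of_adjoint {A B : V3 → V3} (hAB : ∀ x y, g3 x (A y) = g3 (B x) y) (y z : V3) :
    ∑ i, RC k' t (e3 i) y z (A (e3 i)) = (k' - 1) / t ^ 2 *
      ((∑ i, g3 (hpart (e3 i)) (A (e3 i))) * g3 (hpart y) z - g3 (hpart z) (B (hpart y))) := by
  have parseval :
      ∑ i, g3 (hpart (e3 i)) z * g3 (hpart y) (A (e3 i)) = g3 (hpart z) (B (hpart y)) := by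
    rw [← sum_g3_e3_mul_g3_e3]
    refine Finset.sum_congr rfl fun i _ => ?_
    rw [hAB, ← g3_hpart_hpart, g3_comm, g3_hpart_hpart]
  simp only [RC, g3_hpart_hpart]
  rw [← Finset.mul_sum, Finset.sum_sub_distrib, ← Finset.mul_sum, parseval,
    mul_comm (g3 (hpart y) z)]

theorem ricci_RC (y z : V3) : ricci (RC k' t) y z = (k' - 1) / t ^ 2 * g3 (hpart y) z := by
  have contraction := sum_RC_e3_of_adjoint k' t (A := id) (B := id) (fun _ _ => rfl) y z
  simp only [id_eq, sum_g3_hpart_e3_self, g3_comm (hpart z), g3_hpart_hpart] at contraction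
  rw [ricci, contraction]
  ring

theorem ricciStar_RC (y z : V3) :
    ricciStar (RC k' t) y z = -((k' - 1) / t ^ 2 * g3 (hpart y) (phi3 z)) := by
  have phi3_symm : g3 (hpart z) (phi3 (hpart y)) = g3 (hpart y) (phi3 z) := by
    rw [g3_phi3_right, phi3_hpart, g3_comm]
  rw [ricciStar, sum_RC_e3_of_adjoint k' t g3_phi3_right, sum_g3_hpart_e3_phi3_e3, phi3_symm]
  ring

theorem scal_RC : scal (RC k' t) = 2 * (k' - 1) / t ^ 2 := by
  simp only [scal, ricci_RC]
  rw [← Finset.mul_sum, sum_g3_hpart_e3_self]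
  ring

theorem scalStar_RC : scalStar (RC k' t) = 0 := by
  simp only [scalStar, ricciStar_RC]
  rw [Finset.sum_neg_distrib, ← Finset.mul_sum, sum_g3_hpart_e3_phi3_e3, mul_zero, neg_zero]

variable {k' t}

theorem scal_RC_neg_iff (ht : t ≠ 0) : scal (RC k' t) < 0 ↔ k' < 1 := by
  rw [scal_RC, div_lt_iff₀ (by positivity), zero_mul]
  grind

theorem scal_RC_pos_iff (ht : t ≠ 0) : 0 < scal (RC k' t) ↔ 1 < k' := by
  rw [scal_RC, div_pos_iff_of_pos_right (by positivity), mul_pos_iff_of_pos_left two_pos, sub_pos]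

theorem sect_RC_e3_zero_left (y : V3) : sect (RC k' t) (e3 0) y = 0 := by
  simp [sect, RC, hpart_e3_zero, g3]

theorem sect_RC_of_horizontal {x y : V3} (hx : x 0 = 0) (hy : y 0 = 0)
    (hgram : g3 x x * g3 y y - g3 x y ^ 2 ≠ 0) : sect (RC k' t) x y = (k' - 1) / t ^ 2 := by
  rw [sect, div_eq_iff hgram, RC, hpart_eq_self hx, hpart_eq_self hy, g3_comm y x]
  ring

end ConeCurvature

/-- Curvature properties of the cone: (1) the `ξ`-sectional curvatures vanish while
`k(e₁,e₂) = (k′−1)/t²`; (2) it is `*`-scalar flat; (3) `τ = 2(k′−1)/t²`, so `τ < 0` iff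
`k′ < 1` and `τ > 0` iff `k′ > 1`; (4) the nonzero Ricci-type components are
`ρ₁₁ = ρ₂₂ = (k′−1)/t²` and `ρ*₁₂ = ρ*₂₁ = −(k′−1)/t²`. -/
theorem statement7 (k' t : ℝ) (ht : 0 < t) :
    (sect (RC k' t) (e3 0) (e3 1) = 0 ∧ sect (RC k' t) (e3 0) (e3 2) = 0 ∧
      sect (RC k' t) (e3 1) (e3 2) = (k' - 1) / t ^ 2) ∧
    scalStar (RC k' t) = 0 ∧
    (scal (RC k' t) = 2 * (k' - 1) / t ^ 2 ∧
      (scal (RC k' t) < 0 ↔ k' < 1) ∧ (0 < scal (RC k' t) ↔ 1 < k')) ∧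
    (ricci (RC k' t) (e3 1) (e3 1) = (k' - 1) / t ^ 2 ∧
      ricci (RC k' t) (e3 2) (e3 2) = (k' - 1) / t ^ 2 ∧
      ricciStar (RC k' t) (e3 1) (e3 2) = -((k' - 1) / t ^ 2) ∧
      ricciStar (RC k' t) (e3 2) (e3 1) = -((k' - 1) / t ^ 2) ∧
      ricci (RC k' t) (e3 0) (e3 0) = 0 ∧
      ricci (RC k' t) (e3 0) (e3 1) = 0 ∧ ricci (RC k' t) (e3 1) (e3 0) = 0 ∧
      ricci (RC k' t) (e3 0) (e3 2) = 0 ∧ ricci (RC k' t) (e3 2) (e3 0) = 0 ∧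
      ricci (RC k' t) (e3 1) (e3 2) = 0 ∧ ricci (RC k' t) (e3 2) (e3 1) = 0 ∧
      ricciStar (RC k' t) (e3 0) (e3 0) = 0 ∧
      ricciStar (RC k' t) (e3 0) (e3 1) = 0 ∧ ricciStar (RC k' t) (e3 1) (e3 0) = 0 ∧
      ricciStar (RC k' t) (e3 0) (e3 2) = 0 ∧ ricciStar (RC k' t) (e3 2) (e3 0) = 0 ∧
      ricciStar (RC k' t) (e3 1) (e3 1) = 0 ∧ ricciStar (RC k' t) (e3 2) (e3 2) = 0) := by
  have ht' : t ≠ 0 := ht.ne'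
  have horizontal_section : sect (RC k' t) (e3 1) (e3 2) = (k' - 1) / t ^ 2 :=
    sect_RC_of_horizontal (by simp [e3_apply]) (by simp [e3_apply])
      (by simp [g3_e3_right, e3_apply])
  refine ⟨⟨sect_RC_e3_zero_left _, sect_RC_e3_zero_left _, horizontal_section⟩, scalStar_RC k' t,
    ⟨scal_RC k' t, scal_RC_neg_iff ht', scal_RC_pos_iff ht'⟩, ?_⟩
  simp [ricci_RC, ricciStar_RC, g3_hpart_left, phi3, e3_apply]
end
end
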